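/- arXiv:2003.08735 — 2 statements merged into one kernel-verified Lean document; each statement's English description precedes it below -/
import Mathlib

section
/- Let n ≥ 1, let b ∈ X_n, let P be admissible for b, and set f = f_P on ℍ. Let 𝒜(b) = 2·∂_{b_1}(log Z)(b), the partial derivative of log Z in the first coordinate. Then f admits the expansion f(z) = i·(z − b_1)^{−1/2}·(1 + 2𝒜(b)·(z − b_1) + o(z − b_1)) as z → b_1 within ℍ; precisely, ((z − b_1)^{1/2}·f(z) − i − 4i·∂_{b_1}(log Z)(b)·(z − b_1)) / (z − b_1) tends to 0 as z → b_1 with z ∈ ℍ. -/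
open scoped BigOperators
open Finset

noncomputable section

/-- The chamber `X_n = {b : b₁ < b₂ < ⋯ < b₂ₙ}`. -/
def chamber (n : ℕ) : Set (Fin (2*n) → ℝ) := {b | StrictMono b}

/-- For `k : Fin n` (0-based), `idx n k false` is the index of `b_{2k-1}` (1-based),
and `idx n k true` is the index of `b_{2k}` (1-based). -/
def idx (n : ℕ) (k : Fin n) (s : Bool) : Fin (2*n) :=
  if s then ⟨2*k.val+1, by have := k.isLt; omega⟩ else ⟨2*k.val, by have := k.isLt; omega⟩

/-- The sign `σ_i ∈ {±1}` encoded by a boolean configuration. -/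
def sgn {n : ℕ} (σ : Fin n → Bool) (i : Fin n) : ℝ := if σ i then 1 else -1

/-- The cross-ratio `χ_{ij}(b)`. -/
def chi (n : ℕ) (b : Fin (2*n) → ℝ) (i j : Fin n) : ℝ :=
  ((b (idx n i true) - b (idx n j true)) * (b (idx n i false) - b (idx n j false))) /
  ((b (idx n i true) - b (idx n j false)) * (b (idx n i false) - b (idx n j true)))

/-- The multiple SLE_{16/3} partition function `Z`. -/
def Zfun (n : ℕ) (b : Fin (2*n) → ℝ) : ℝ :=
  (∏ k : Fin n, (b (idx n k true) - b (idx n k false)) ^ (-(1:ℝ)/8)) *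
  ((∑ σ : Fin n → Bool, ∏ p ∈ Finset.univ.filter (fun p : Fin n × Fin n => p.1 < p.2),
      chi n b p.1 p.2 ^ (sgn σ p.1 * sgn σ p.2 / 4)) ^ ((1:ℝ)/2))

/-- Partial derivative in the `i`-th coordinate. -/
def pderiv' {m : ℕ} (i : Fin m) (f : (Fin m → ℝ) → ℝ) (x : Fin m → ℝ) : ℝ :=
  fderiv ℝ f x (Pi.single i 1)


/-- The upper half-plane `ℍ`. -/
def UHP : Set ℂ := {z | 0 < z.im}

/-- `D(z) = ∏_{j=1}^{2n} (z − b_j)^{1/2}` with the principal branch of the square root. -/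
def Dfun (n : ℕ) (b : Fin (2*n) → ℝ) (z : ℂ) : ℂ :=
  ∏ j : Fin (2*n), (z - (b j : ℂ)) ^ ((1:ℂ)/2)

/-- `f_P(z) = P(z)/D(z)`. -/
def fP (n : ℕ) (b : Fin (2*n) → ℝ) (P : Polynomial ℂ) (z : ℂ) : ℂ :=
  Polynomial.eval z P / Dfun n b z

/-- `P` is admissible for `b`: `deg P ≤ n − 1`, the matching conditions (i) hold at the
pairs `(b_{2i−1}, b_{2i})`, `i = 2, …, n`, and the normalization (ii) holds at `b₁`. -/
def Admissible (n : ℕ) (hn : 0 < n) (b : Fin (2*n) → ℝ) (P : Polynomial ℂ) : Prop :=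
  P.natDegree ≤ n - 1 ∧
  (∀ k : Fin n, 1 ≤ k.val → ∃ L : ℂ,
      Filter.Tendsto
        (fun z : ℂ => fP n b P z * (z - (b (idx n k false) : ℂ)) ^ ((1:ℂ)/2)
          * (z - (b (idx n k true) : ℂ)) ^ ((1:ℂ)/2))
        (nhdsWithin (b (idx n k false) : ℂ) UHP) (nhds L) ∧
      Filter.Tendsto
        (fun z : ℂ => fP n b P z * (z - (b (idx n k false) : ℂ)) ^ ((1:ℂ)/2)
          * (z - (b (idx n k true) : ℂ)) ^ ((1:ℂ)/2))
        (nhdsWithin (b (idx n k true) : ℂ) UHP) (nhds (-L))) ∧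
  Filter.Tendsto
    (fun z : ℂ => (z - (b ⟨0, by omega⟩ : ℂ)) ^ ((1:ℂ)/2) * fP n b P z)
    (nhdsWithin (b ⟨0, by omega⟩ : ℂ) UHP) (nhds Complex.I)

end

/-!
Evaluated at the ends of the `k`-th interval `[x k, y k]`, the matching condition reads
`P(y k) = -ρ k * P(x k)` with an explicit `ρ k > 0`. The Boltzmann-weighted sum `Q` over spin
configurations of the Lagrange basis polynomials at the tip satisfies the same conditions: reversing
the `k`-th spin moves the `k`-th node to the other endpoint, and the weights are such that this
matches each term at `x k` with a term at `y k`. A real polynomial of degree less than the number of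
intervals that satisfies these conditions has a zero in every interval but the tip one, so it
vanishes identically if it also vanishes at the tip. Hence `P` is a multiple of `Q`, and `f_P` at
the tip is governed by `Q' / Q`. Differentiating the weights in the tip coordinate gives
`4 ∂ log Z = Q' / Q - ½ ∑ (b₁ - b_j)⁻¹`, the logarithmic derivative of `(z - b₁)^{1/2} f_P` at `b₁`.
-/

section LogarithmicDerivative

variable {𝕜 : Type*} [NontriviallyNormedField 𝕜]

/-- `l` is a logarithmic derivative of `f` at `x` within `s`, in the multiplied-out form
`f' = f · l`, which makes sense without `f x ≠ 0`. -/
def HasLogDerivWithinAt (f : 𝕜 → 𝕜) (l : 𝕜) (s : Set 𝕜) (x : 𝕜) : Prop :=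
  HasDerivWithinAt f (f x * l) s x

namespace HasLogDerivWithinAt

variable {f g : 𝕜 → 𝕜} {k l x : 𝕜} {s : Set 𝕜}

theorem sub_const {c : 𝕜} (hx : x ≠ c) (s : Set 𝕜) :
    HasLogDerivWithinAt (fun t ↦ t - c) (x - c)⁻¹ s x :=
  ((hasDerivWithinAt_id x s).sub_const c).congr_deriv (mul_inv_cancel₀ (sub_ne_zero.2 hx)).symm

theorem const_sub {c : 𝕜} (hx : x ≠ c) (s : Set 𝕜) :
    HasLogDerivWithinAt (fun t ↦ c - t) (x - c)⁻¹ s x :=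
  ((hasDerivWithinAt_id x s).const_sub c).congr_deriv <| by
    beta_reduce
    rw [← neg_sub x c, neg_mul, mul_inv_cancel₀ (sub_ne_zero.2 hx)]

theorem const_mul (c : 𝕜) (hf : HasLogDerivWithinAt f l s x) :
    HasLogDerivWithinAt (fun t ↦ c * f t) l s x :=
  (HasDerivWithinAt.const_mul c hf).congr_deriv (mul_assoc _ _ _).symm

theorem mul (hf : HasLogDerivWithinAt f k s x) (hg : HasLogDerivWithinAt g l s x) :
    HasLogDerivWithinAt (fun t ↦ f t * g t) (k + l) s x :=
  (HasDerivWithinAt.fun_mul hf hg).congr_deriv (by ring)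

theorem div (hf : HasLogDerivWithinAt f k s x) (hg : HasLogDerivWithinAt g l s x) (hx : g x ≠ 0) :
    HasLogDerivWithinAt (fun t ↦ f t / g t) (k - l) s x :=
  (HasDerivWithinAt.fun_div hf hg hx).congr_deriv (by field_simp)

theorem prod {ι : Type*} {u : Finset ι} {f : ι → 𝕜 → 𝕜} {l : ι → 𝕜}
    (hf : ∀ i ∈ u, HasLogDerivWithinAt (f i) (l i) s x) :
    HasLogDerivWithinAt (fun t ↦ ∏ i ∈ u, f i t) (∑ i ∈ u, l i) s x := by
  classical
  refine (HasDerivWithinAt.fun_finsetProd hf).congr_deriv ?_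
  rw [mul_sum]
  refine sum_congr rfl fun i hi ↦ ?_
  rw [smul_eq_mul, ← mul_assoc, prod_erase_mul _ _ hi]

theorem sum {ι : Type*} {u : Finset ι} {f : ι → 𝕜 → 𝕜} {l : ι → 𝕜}
    (hf : ∀ i ∈ u, HasLogDerivWithinAt (f i) (l i) s x) (hx : ∑ i ∈ u, f i x ≠ 0) :
    HasLogDerivWithinAt (fun t ↦ ∑ i ∈ u, f i t) ((∑ i ∈ u, f i x * l i) / ∑ i ∈ u, f i x) s x :=
  (HasDerivWithinAt.fun_sum hf).congr_deriv (mul_div_cancel₀ _ hx).symm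

theorem rpow_const {f : ℝ → ℝ} {l x : ℝ} {s : Set ℝ} (hf : HasLogDerivWithinAt f l s x)
    (hx : f x ≠ 0) (α : ℝ) : HasLogDerivWithinAt (fun t ↦ f t ^ α) (α * l) s x :=
  (HasDerivWithinAt.rpow_const hf (.inl hx)).congr_deriv <| by
    rw [Real.rpow_sub_one hx]; field_simp

theorem tendsto (hf : HasLogDerivWithinAt f l s x) :
    Filter.Tendsto f (nhdsWithin x s) (nhds (f x)) :=
  HasDerivWithinAt.continuousWithinAt hf

theorem tendsto_expansion_div (hf : HasLogDerivWithinAt f l s x) (hx : x ∉ s) :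
    Filter.Tendsto (fun z ↦ (f z - f x - f x * l * (z - x)) / (z - x)) (nhdsWithin x s)
      (nhds 0) := by
  have hslope := ((hasDerivWithinAt_iff_tendsto_slope' hx).1 hf).sub_const (f x * l)
  rw [sub_self] at hslope
  refine hslope.congr' ?_
  filter_upwards [self_mem_nhdsWithin] with z hz
  have hzx : z - x ≠ 0 := sub_ne_zero.2 (ne_of_mem_of_not_mem hz hx)
  rw [slope_def_field]
  field_simp

theorem hasDerivAt_log {f : ℝ → ℝ} {l x : ℝ} (hf : HasLogDerivWithinAt f l Set.univ x)
    (hx : f x ≠ 0) : HasDerivAt (fun t ↦ Real.log (f t)) l x :=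
  ((hasDerivWithinAt_univ.1 hf).log hx).congr_deriv (mul_div_cancel_left₀ l hx)

end HasLogDerivWithinAt

end LogarithmicDerivative

section UpperHalfPlane

theorem ofReal_notMem_UHP (p : ℝ) : (p : ℂ) ∉ UHP := by
  simp [UHP]

theorem nhdsWithin_UHP_neBot (p : ℝ) : (nhdsWithin (p : ℂ) UHP).NeBot := by
  rw [← mem_closure_iff_nhdsWithin_neBot]
  simp only [UHP, Complex.closure_setOfPred_lt_im]
  simp

theorem ofReal_mul_cpow_of_pos {r : ℝ} (hr : 0 < r) {w : ℂ} (hw : w ≠ 0) (α : ℂ) :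
    (r * w) ^ α = (r : ℂ) ^ α * w ^ α := by
  have hr' : (r : ℂ) ≠ 0 := Complex.ofReal_ne_zero.2 hr.ne'
  rw [Complex.cpow_def_of_ne_zero (mul_ne_zero hr' hw), Complex.cpow_def_of_ne_zero hr',
    Complex.cpow_def_of_ne_zero hw, Complex.log_ofReal_mul hr hw, Complex.ofReal_log hr.le,
    add_mul, Complex.exp_add]

/- For `r < 0` the value `r ^ α` of the principal branch, where `arg r = π`, is the limit from the
upper half-plane. -/
theorem ofReal_mul_cpow_of_im_pos {r : ℝ} {w : ℂ} (h : 0 < (r * w).im) (α : ℂ) :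
    (r * w) ^ α = (r : ℂ) ^ α * w ^ α := by
  have hrw : 0 < r * w.im := by simpa using h
  have hw : w ≠ 0 := by rintro rfl; simp at hrw
  rcases lt_trichotomy r 0 with hr | rfl | hr
  · have him : w.im < 0 := neg_of_mul_pos_right hrw hr.le
    have hr0 : (r : ℂ) ≠ 0 := Complex.ofReal_ne_zero.2 hr.ne
    have hlog : Complex.log (r * w) = Complex.log r + Complex.log w := by
      rw [← neg_mul_neg, ← Complex.ofReal_neg,
        Complex.log_ofReal_mul (neg_pos.2 hr) (neg_ne_zero.2 hw)]
      simp only [Complex.log, Complex.arg_neg_eq_arg_add_pi_of_im_neg him,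
        Complex.arg_ofReal_of_neg hr, norm_neg, Complex.norm_real, Real.norm_eq_abs,
        abs_of_neg hr, Complex.ofReal_add]
      ring
    rw [Complex.cpow_def_of_ne_zero (mul_ne_zero hr0 hw), Complex.cpow_def_of_ne_zero hr0,
      Complex.cpow_def_of_ne_zero hw, hlog, add_mul, Complex.exp_add]
  · simp at hrw
  · exact ofReal_mul_cpow_of_pos hr hw α

theorem hasLogDerivWithinAt_sub_ofReal_cpow {c p : ℝ} (h : p ≠ c) (α : ℂ) :
    HasLogDerivWithinAt (fun z : ℂ ↦ (z - c) ^ α) (α * ((p : ℂ) - c)⁻¹) UHP p := by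
  have hpc : (p : ℂ) - c ≠ 0 := sub_ne_zero.2 (Complex.ofReal_injective.ne h)
  have hfactor : ∀ z ∈ UHP, (z - c) ^ α = ((p : ℂ) - c) ^ α * ((z - c) / (p - c)) ^ α := by
    intro z hz
    have hcancel : ((p - c : ℝ) : ℂ) * ((z - c) / (p - c)) = z - c := by
      rw [Complex.ofReal_sub, mul_div_cancel₀ _ hpc]
    have him : 0 < (((p - c : ℝ) : ℂ) * ((z - c) / (p - c))).im := by
      rw [hcancel]
      simpa [UHP] using hz
    have hsplit := ofReal_mul_cpow_of_im_pos him α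
    rwa [hcancel, Complex.ofReal_sub] at hsplit
  have hderiv := ((((hasDerivWithinAt_id (p : ℂ) UHP).sub_const (c : ℂ)).div_const
    ((p : ℂ) - c)).cpow_const (c := α) (by simp [div_self hpc])).const_mul (((p : ℂ) - c) ^ α)
  refine (hderiv.congr hfactor ?_).congr_deriv ?_
  · simp [div_self hpc]
  · simp only [id_eq, div_self hpc, Complex.one_cpow]
    ring

end UpperHalfPlane

section OrderedPairs

theorem prod_lt_pairs_eq {ι M : Type*} [Fintype ι] [LinearOrder ι] [CommMonoid M] (i : ι)
    {g : ι → ι → M} (hg : ∀ j k, g j k = g k j) :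
    ∏ p : ι × ι with p.1 < p.2, g p.1 p.2 =
      (∏ p : ι × ι with p.1 < p.2 ∧ p.1 ≠ i ∧ p.2 ≠ i, g p.1 p.2) *
        ∏ k ∈ univ.erase i, g i k := by
  rw [mul_comm, ← prod_filter_mul_prod_filter_not _ (fun p : ι × ι ↦ p.1 = i ∨ p.2 = i),
    filter_filter, filter_filter]
  congr 1
  · refine prod_nbij' (fun p ↦ if p.1 = i then p.2 else p.1)
      (fun k ↦ if i < k then (i, k) else (k, i)) ?_ ?_ ?_ ?_ ?_ <;> grind
  · simp only [not_or]

end OrderedPairs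

section Lagrange

open Polynomial

variable {ι F : Type*} [DecidableEq ι] [Field F] {s : Finset ι} {i j : ι}

theorem eval_derivative_lagrangeBasis_self {v : ι → F} (hv : Set.InjOn v s) (hi : i ∈ s) :
    (derivative (Lagrange.basis s v i)).eval (v i) = ∑ j ∈ s.erase i, (v i - v j)⁻¹ := by
  have hne : ∀ j ∈ s.erase i, v i ≠ v j := fun j hj h ↦
    ne_of_mem_erase hj (hv hi (mem_of_mem_erase hj) h).symm
  rw [Lagrange.basis, derivative_prod_finset, eval_finsetSum]
  refine sum_congr rfl fun j _ ↦ ?_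
  rw [eval_mul, eval_prod, prod_eq_one fun k hk ↦
    Lagrange.eval_basisDivisor_left_of_ne (hne k (mem_of_mem_erase hk))]
  simp [Lagrange.basisDivisor]

theorem eval_lagrangeBasis_update_swap {v : ι → F} {a c : F} (hi : i ∈ s) (hj : j ∈ s)
    (hij : i ≠ j) (ha : a ≠ v j) (hc : c ≠ v j) :
    (Lagrange.basis s (Function.update v i a) j).eval c * ∏ k ∈ s.erase i, (a - v k) =
      -((Lagrange.basis s (Function.update v i c) j).eval a * ∏ k ∈ s.erase i, (c - v k)) := by
  have hmem : i ∈ s.erase j := mem_erase.2 ⟨hij, hi⟩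
  have hsplit : ∀ a c : F, a ≠ v j →
      (Lagrange.basis s (Function.update v i a) j).eval c * ∏ k ∈ s.erase i, (a - v k) =
        (a - c) * ((∏ k ∈ (s.erase j).erase i, (v j - v k)⁻¹ * (c - v k)) *
          ∏ k ∈ (s.erase i).erase j, (a - v k)) := by
    intro a c ha
    rw [Lagrange.basis, eval_prod, ← mul_prod_erase _ _ hmem,
      ← mul_prod_erase _ _ (mem_erase.2 ⟨hij.symm, hj⟩)]
    have hrest : ∏ k ∈ (s.erase j).erase i, (Lagrange.basisDivisor (Function.update v i a j)
        (Function.update v i a k)).eval c = ∏ k ∈ (s.erase j).erase i, (v j - v k)⁻¹ * (c - v k) :=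
      prod_congr rfl fun k hk ↦ by
        simp [Lagrange.basisDivisor, hij.symm, ne_of_mem_erase hk]
    have hdiv : (Lagrange.basisDivisor (Function.update v i a j)
        (Function.update v i a i)).eval c = (v j - a)⁻¹ * (c - a) := by
      simp [Lagrange.basisDivisor, hij.symm]
    rw [hrest, hdiv]
    field [sub_ne_zero.2 ha, sub_ne_zero.2 ha.symm]
  rw [hsplit a c ha, hsplit c a hc, prod_mul_distrib, prod_mul_distrib, erase_right_comm (a := j)]
  ring

end Lagrange

section OrderedIntervals

variable {ι : Type*} [LinearOrder ι] {x y : ι → ℝ} {i k : ι} {a c t : ℝ}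

/-- The intervals `[x k, y k]` are nondegenerate and arranged on the line in the order of `ι`.
Here `x k` and `y k` play the roles of `b_{2k-1}` and `b_{2k}`. -/
structure OrderedIntervals (x y : ι → ℝ) : Prop where
  lt (k : ι) : x k < y k
  right_lt_left {j k : ι} : j < k → y j < x k

namespace OrderedIntervals

theorem left_mem_Icc (h : OrderedIntervals x y) (k : ι) : x k ∈ Set.Icc (x k) (y k) :=
  Set.left_mem_Icc.2 (h.lt k).le

theorem right_mem_Icc (h : OrderedIntervals x y) (k : ι) : y k ∈ Set.Icc (x k) (y k) :=
  Set.right_mem_Icc.2 (h.lt k).le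

theorem ne_of_mem_Icc (h : OrderedIntervals x y) (hik : i ≠ k) (ha : a ∈ Set.Icc (x i) (y i))
    (ht : t ∈ Set.Icc (x k) (y k)) : a ≠ t := by
  rcases hik.lt_or_gt with hlt | hlt <;> have := h.right_lt_left hlt <;> grind

theorem injective_of_mem_Icc (h : OrderedIntervals x y) {t : ι → ℝ}
    (ht : ∀ k, t k ∈ Set.Icc (x k) (y k)) : Function.Injective t := fun i k hik ↦ by
  by_contra hne
  exact h.ne_of_mem_Icc hne (ht i) (ht k) hik

theorem sub_div_sub_pos (h : OrderedIntervals x y) (hik : i ≠ k) (ha : a ∈ Set.Icc (x i) (y i))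
    (hc : c ∈ Set.Icc (x i) (y i)) (ht : t ∈ Set.Icc (x k) (y k)) : 0 < (c - t) / (a - t) := by
  rcases hik.lt_or_gt with hlt | hlt
  · have := h.right_lt_left hlt
    exact div_pos_of_neg_of_neg (by grind) (by grind)
  · have := h.right_lt_left hlt
    exact div_pos (by grind) (by grind)

end OrderedIntervals

end OrderedIntervals

section Spins

/-- The value `±1` of a spin encoded by a boolean. -/
noncomputable def spin (s : Bool) : ℝ := if s then 1 else -1

theorem spin_not (s : Bool) : spin (!s) = -spin s := by
  cases s <;> simp [spin]

theorem spin_mul_spin (s t : Bool) : spin s * spin t = if s = t then 1 else -1 := by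
  cases s <;> cases t <;> simp [spin]

variable {ι : Type*} [DecidableEq ι]

/-- The spin configuration `σ` with the spin at `i` reversed. -/
def flipSpin (i : ι) (σ : ι → Bool) : ι → Bool := Function.update σ i (!σ i)

theorem flipSpin_self (i : ι) (σ : ι → Bool) : flipSpin i σ i = !σ i :=
  Function.update_self ..

theorem flipSpin_of_ne {i k : ι} (hk : k ≠ i) (σ : ι → Bool) : flipSpin i σ k = σ k :=
  Function.update_of_ne hk ..

theorem flipSpin_involutive (i : ι) : Function.Involutive (flipSpin i) := fun σ ↦ by
  simp [flipSpin]

end Spins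

section PartitionFunction

variable {ι : Type*} {x y : ι → ℝ} {i : ι}

/-- The cross-ratio `χ_{ij}` of the endpoints of the intervals `[x i, y i]` and `[x j, y j]`. -/
noncomputable def crossRatio (x y : ι → ℝ) (i j : ι) : ℝ :=
  ((y i - y j) * (x i - x j)) / ((y i - x j) * (x i - y j))

theorem crossRatio_comm (x y : ι → ℝ) (i j : ι) : crossRatio x y i j = crossRatio x y j i := by
  rw [crossRatio, crossRatio, ← neg_mul_neg, neg_sub, neg_sub]
  congr 1
  ring

theorem crossRatio_eq_div (x y : ι → ℝ) (i j : ι) :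
    crossRatio x y i j = ((y i - y j) / (x i - y j)) / ((y i - x j) / (x i - x j)) := by
  rw [crossRatio, div_div_div_eq, mul_comm (x i - y j)]

variable [LinearOrder ι]

theorem OrderedIntervals.crossRatio_pos (h : OrderedIntervals x y) {i j : ι} (hij : i ≠ j) :
    0 < crossRatio x y i j := by
  have hpos {t : ℝ} (ht : t ∈ Set.Icc (x j) (y j)) : 0 < (y i - t) / (x i - t) :=
    h.sub_div_sub_pos hij (h.left_mem_Icc i) (h.right_mem_Icc i) ht
  rw [crossRatio_eq_div]
  exact div_pos (hpos (h.right_mem_Icc j)) (hpos (h.left_mem_Icc j))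

variable [Fintype ι]

/-- The Boltzmann weight `∏_{i<j} χ_{ij}^{σ_i σ_j / 4}` of a spin configuration. -/
noncomputable def spinWeight (x y : ι → ℝ) (σ : ι → Bool) : ℝ :=
  ∏ p : ι × ι with p.1 < p.2, crossRatio x y p.1 p.2 ^ (spin (σ p.1) * spin (σ p.2) / 4)

/-- The partition function `Z` in terms of the left endpoints `x` and the right endpoints `y`. -/
noncomputable def partitionFunction (x y : ι → ℝ) : ℝ :=
  (∏ k, (y k - x k) ^ (-(1 : ℝ) / 8)) * (∑ σ, spinWeight x y σ) ^ ((1 : ℝ) / 2)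

theorem OrderedIntervals.spinWeight_pos (h : OrderedIntervals x y) (σ : ι → Bool) :
    0 < spinWeight x y σ :=
  prod_pos fun _ hp ↦ Real.rpow_pos_of_pos (h.crossRatio_pos (mem_filter.1 hp).2.ne) _

theorem OrderedIntervals.sum_spinWeight_pos (h : OrderedIntervals x y) :
    0 < ∑ σ, spinWeight x y σ :=
  sum_pos (fun σ _ ↦ h.spinWeight_pos σ) univ_nonempty

theorem OrderedIntervals.partitionFunction_pos (h : OrderedIntervals x y) :
    0 < partitionFunction x y :=
  mul_pos (prod_pos fun k _ ↦ Real.rpow_pos_of_pos (sub_pos.2 (h.lt k)) _)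
    (Real.rpow_pos_of_pos h.sum_spinWeight_pos _)

theorem spinWeight_eq_mul_prod_erase (x y : ι → ℝ) (i : ι) (σ : ι → Bool) :
    spinWeight x y σ =
      (∏ p : ι × ι with p.1 < p.2 ∧ p.1 ≠ i ∧ p.2 ≠ i,
          crossRatio x y p.1 p.2 ^ (spin (σ p.1) * spin (σ p.2) / 4)) *
        ∏ k ∈ univ.erase i, crossRatio x y i k ^ (spin (σ i) * spin (σ k) / 4) :=
  prod_lt_pairs_eq i (g := fun j k ↦ crossRatio x y j k ^ (spin (σ j) * spin (σ k) / 4))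
    fun j k ↦ by rw [crossRatio_comm, mul_comm (spin _)]

theorem OrderedIntervals.spinWeight_eq_spinWeight_flipSpin_mul (h : OrderedIntervals x y) (i : ι)
    (σ : ι → Bool) :
    spinWeight x y σ = spinWeight x y (flipSpin i σ) *
      ∏ k ∈ univ.erase i, crossRatio x y i k ^ (spin (σ i) * spin (σ k) / 2) := by
  rw [spinWeight_eq_mul_prod_erase x y i, spinWeight_eq_mul_prod_erase x y i, mul_assoc,
    ← prod_mul_distrib]
  congr 1
  · refine prod_congr rfl fun p hp ↦ ?_
    obtain ⟨-, -, h₁, h₂⟩ := mem_filter.1 hp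
    rw [flipSpin_of_ne h₁, flipSpin_of_ne h₂]
  · refine prod_congr rfl fun k hk ↦ ?_
    have hki := ne_of_mem_erase hk
    rw [flipSpin_self, flipSpin_of_ne hki, spin_not,
      ← Real.rpow_add (h.crossRatio_pos hki.symm)]
    congr 1
    ring

end PartitionFunction

section SpinPolynomial

open Polynomial

theorem sqrt_mul_sqrt_mul_div_rpow {u v : ℝ} (hu : 0 < u) (hv : 0 < v) :
    √u * √v * (v / u) ^ ((1 : ℝ) / 2) = v := by
  rw [← Real.sqrt_eq_rpow, Real.sqrt_div hv.le, mul_assoc, mul_div_assoc', Real.mul_self_sqrt hv.le,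
    mul_div_cancel₀ _ (Real.sqrt_pos.2 hu).ne']

variable {ι : Type*} {x y : ι → ℝ} {i k m : ι}

/-- The endpoint of `[x k, y k]` selected by `σ` relative to the tip interval `m`: the left one if
the spins at `k` and `m` agree, the right one otherwise. -/
def selectedPoint (x y : ι → ℝ) (m : ι) (σ : ι → Bool) (k : ι) : ℝ :=
  if σ k = σ m then x k else y k

theorem selectedPoint_self (x y : ι → ℝ) (m : ι) (σ : ι → Bool) :
    selectedPoint x y m σ m = x m :=
  if_pos rfl

theorem selectedPoint_flipSpin [DecidableEq ι] (him : i ≠ m) (x y : ι → ℝ)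
    (σ : ι → Bool) :
    selectedPoint x y m (flipSpin i σ) =
      Function.update (selectedPoint x y m σ) i (if σ i = σ m then y i else x i) := by
  ext k
  rcases eq_or_ne k i with rfl | hk
  · cases hk : σ k <;> cases hm : σ m <;>
      simp [selectedPoint, flipSpin_self, flipSpin_of_ne him.symm, hk, hm]
  · simp [selectedPoint, flipSpin_of_ne hk, flipSpin_of_ne him.symm, hk]

/-- The square root of the ratio of `∏_{k ≠ i} (t - x k)(t - y k)` at `t = y i` and `t = x i`. -/
noncomputable def matchingRatio [Fintype ι] [DecidableEq ι] (x y : ι → ℝ) (i : ι) : ℝ :=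
  ∏ k ∈ univ.erase i, √((y i - x k) / (x i - x k)) * √((y i - y k) / (x i - y k))

theorem matchingRatio_nonneg [Fintype ι] [DecidableEq ι] (x y : ι → ℝ) (i : ι) :
    0 ≤ matchingRatio x y i :=
  prod_nonneg fun _ _ ↦ by positivity

variable [LinearOrder ι]

theorem OrderedIntervals.selectedPoint_mem_Icc (h : OrderedIntervals x y) (m : ι) (σ : ι → Bool)
    (k : ι) : selectedPoint x y m σ k ∈ Set.Icc (x k) (y k) := by
  rw [selectedPoint]
  split_ifs
  exacts [h.left_mem_Icc k, h.right_mem_Icc k]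

theorem OrderedIntervals.selectedPoint_injective (h : OrderedIntervals x y) (m : ι)
    (σ : ι → Bool) : Function.Injective (selectedPoint x y m σ) :=
  h.injective_of_mem_Icc (h.selectedPoint_mem_Icc m σ)

theorem OrderedIntervals.sub_selectedPoint_eq (h : OrderedIntervals x y) {σ : ι → Bool}
    (hσ : σ i ≠ σ m) (hki : k ≠ i) :
    y i - selectedPoint x y m σ k = (x i - selectedPoint x y m σ k) *
      (√((y i - x k) / (x i - x k)) * √((y i - y k) / (x i - y k)) *
        crossRatio x y i k ^ (spin (σ i) * spin (σ k) / 2)) := by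
  have hpos {t : ℝ} (ht : t ∈ Set.Icc (x k) (y k)) : 0 < (y i - t) / (x i - t) :=
    h.sub_div_sub_pos hki.symm (h.left_mem_Icc i) (h.right_mem_Icc i) ht
  have hne {t : ℝ} (ht : t ∈ Set.Icc (x k) (y k)) : x i - t ≠ 0 :=
    sub_ne_zero.2 (h.ne_of_mem_Icc hki.symm (h.left_mem_Icc i) ht)
  have hu := hpos (h.left_mem_Icc k)
  have hv := hpos (h.right_mem_Icc k)
  rw [selectedPoint, spin_mul_spin, crossRatio_eq_div]
  rcases eq_or_ne (σ k) (σ m) with hkm | hkm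
  · rw [if_pos hkm, if_neg (hkm ▸ hσ), neg_div, Real.rpow_neg (div_pos hv hu).le,
      ← Real.inv_rpow (div_pos hv hu).le, inv_div, mul_comm √_ √_, sqrt_mul_sqrt_mul_div_rpow hv hu,
      mul_div_cancel₀ _ (hne (h.left_mem_Icc k))]
  · have hik : σ i = σ k := (Bool.eq_not.2 hσ).trans (Bool.eq_not.2 hkm).symm
    rw [if_neg hkm, if_pos hik, sqrt_mul_sqrt_mul_div_rpow hu hv,
      mul_div_cancel₀ _ (hne (h.right_mem_Icc k))]

variable [Fintype ι]

theorem OrderedIntervals.spinWeight_flipSpin_mul_prod (h : OrderedIntervals x y) {σ : ι → Bool}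
    (hσ : σ i ≠ σ m) :
    spinWeight x y (flipSpin i σ) * ∏ k ∈ univ.erase i, (y i - selectedPoint x y m σ k) =
      matchingRatio x y i *
        (spinWeight x y σ * ∏ k ∈ univ.erase i, (x i - selectedPoint x y m σ k)) := by
  rw [prod_congr rfl fun k hk ↦ h.sub_selectedPoint_eq hσ (ne_of_mem_erase hk), prod_mul_distrib,
    prod_mul_distrib, h.spinWeight_eq_spinWeight_flipSpin_mul i σ, matchingRatio]
  ring

/-- The Boltzmann-weighted sum over `σ` of the polynomials of degree less than the number of
intervals that equal `1` at the tip `x m` and vanish at the other points selected by `σ`. -/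
noncomputable def spinPolynomial (x y : ι → ℝ) (m : ι) : ℝ[X] :=
  ∑ σ, C (spinWeight x y σ) * Lagrange.basis univ (selectedPoint x y m σ) m

theorem eval_spinPolynomial (x y : ι → ℝ) (m : ι) (t : ℝ) :
    (spinPolynomial x y m).eval t =
      ∑ σ, spinWeight x y σ * (Lagrange.basis univ (selectedPoint x y m σ) m).eval t := by
  simp only [spinPolynomial, eval_finsetSum, eval_mul, eval_C]

namespace OrderedIntervals

theorem spinWeight_flipSpin_mul_eval_basis (h : OrderedIntervals x y) (him : i ≠ m)
    (σ : ι → Bool) :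
    spinWeight x y (flipSpin i σ) *
        (Lagrange.basis univ (selectedPoint x y m (flipSpin i σ)) m).eval (y i) =
      -(matchingRatio x y i *
        (spinWeight x y σ * (Lagrange.basis univ (selectedPoint x y m σ) m).eval (x i))) := by
  rcases eq_or_ne (σ i) (σ m) with hσ | hσ
  · have hx : selectedPoint x y m σ i = x i := if_pos hσ
    have hy : selectedPoint x y m (flipSpin i σ) i = y i := by
      rw [selectedPoint_flipSpin him, Function.update_self, if_pos hσ]
    rw [← hy, Lagrange.eval_basis_of_ne him.symm (mem_univ i), ← hx,
      Lagrange.eval_basis_of_ne him.symm (mem_univ i)]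
    simp
  · have hpoint {a : ℝ} (ha : a ∈ Set.Icc (x i) (y i)) (k : ι) (hk : i ≠ k) :
        a ≠ selectedPoint x y m σ k := h.ne_of_mem_Icc hk ha (h.selectedPoint_mem_Icc m σ k)
    have hσy : Function.update (selectedPoint x y m σ) i (y i) = selectedPoint x y m σ :=
      Function.update_eq_self_iff.2 (if_neg hσ).symm
    have hswap := eval_lagrangeBasis_update_swap (mem_univ i) (mem_univ m) him
      (hpoint (h.left_mem_Icc i) m him) (hpoint (h.right_mem_Icc i) m him)
    rw [hσy] at hswap
    have hprod : ∏ k ∈ univ.erase i, (x i - selectedPoint x y m σ k) ≠ 0 :=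
      prod_ne_zero_iff.2 fun k hk ↦
        sub_ne_zero.2 (hpoint (h.left_mem_Icc i) k (ne_of_mem_erase hk).symm)
    rw [selectedPoint_flipSpin him, if_neg hσ]
    refine mul_right_cancel₀ hprod ?_
    linear_combination spinWeight x y (flipSpin i σ) * hswap -
      (Lagrange.basis univ (selectedPoint x y m σ) m).eval (x i) *
        h.spinWeight_flipSpin_mul_prod hσ

theorem eval_spinPolynomial_right (h : OrderedIntervals x y) (him : i ≠ m) :
    (spinPolynomial x y m).eval (y i) =
      -(matchingRatio x y i * (spinPolynomial x y m).eval (x i)) := by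
  rw [eval_spinPolynomial, eval_spinPolynomial, ← (flipSpin_involutive i).bijective.sum_comp,
    sum_congr rfl fun σ _ ↦ h.spinWeight_flipSpin_mul_eval_basis him σ, sum_neg_distrib, mul_sum]

theorem eval_spinPolynomial_left_self (h : OrderedIntervals x y) (m : ι) :
    (spinPolynomial x y m).eval (x m) = ∑ σ, spinWeight x y σ := by
  rw [eval_spinPolynomial]
  refine sum_congr rfl fun σ _ ↦ ?_
  have hbasis := Lagrange.eval_basis_self (h.selectedPoint_injective m σ).injOn (mem_univ m)
  rw [selectedPoint_self] at hbasis
  rw [hbasis, mul_one]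

theorem eval_derivative_spinPolynomial_left_self (h : OrderedIntervals x y) (m : ι) :
    (derivative (spinPolynomial x y m)).eval (x m) =
      ∑ σ, spinWeight x y σ * ∑ k ∈ univ.erase m, (x m - selectedPoint x y m σ k)⁻¹ := by
  simp only [spinPolynomial, derivative_sum, derivative_C_mul, eval_finsetSum, eval_C_mul]
  refine sum_congr rfl fun σ _ ↦ ?_
  have hbasis := eval_derivative_lagrangeBasis_self (h.selectedPoint_injective m σ).injOn
    (mem_univ m)
  rw [selectedPoint_self] at hbasis
  rw [hbasis]

theorem degree_spinPolynomial_lt (h : OrderedIntervals x y) (m : ι) :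
    (spinPolynomial x y m).degree < Fintype.card ι := by
  refine (degree_sum_le _ _).trans_lt ((Finset.sup_lt_iff (WithBot.bot_lt_coe _)).2 fun σ _ ↦ ?_)
  rw [degree_C_mul (h.spinWeight_pos σ).ne',
    Lagrange.degree_basis (h.selectedPoint_injective m σ).injOn (mem_univ m), card_univ]
  exact_mod_cast Nat.sub_lt (Fintype.card_pos_iff.2 ⟨m⟩) one_pos

end OrderedIntervals

end SpinPolynomial

section Uniqueness

open Polynomial

theorem exists_eval_eq_linearMap_eval {R A : Type*} [CommSemiring R] [Semiring A] [Algebra R A]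
    (φ : A →ₗ[R] R) (P : A[X]) :
    ∃ T : R[X], T.degree ≤ P.degree ∧ ∀ t, T.eval t = φ (P.eval (algebraMap R A t)) := by
  refine ⟨∑ k ∈ P.support, monomial k (φ (P.coeff k)), ?_, fun t ↦ ?_⟩
  · refine (degree_sum_le _ _).trans (Finset.sup_le fun k hk ↦ ?_)
    exact (degree_monomial_le _ _).trans (le_degree_of_mem_supp k hk)
  · simp only [eval_finsetSum, eval_monomial, eval_eq_sum (p := P), Polynomial.sum, map_sum]
    refine sum_congr rfl fun k _ ↦ ?_
    rw [← map_pow, ← Algebra.commutes, ← Algebra.smul_def, map_smul, smul_eq_mul, mul_comm]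

namespace OrderedIntervals

variable {ι : Type*} [LinearOrder ι] [Fintype ι] {x y ρ : ι → ℝ} {m : ι}

theorem eq_zero_of_eval_right_eq (h : OrderedIntervals x y) (hρ : ∀ k, 0 ≤ ρ k) {P : ℝ[X]}
    (hdeg : P.degree < Fintype.card ι) (htip : P.eval (x m) = 0)
    (hmatch : ∀ k ≠ m, P.eval (y k) = -(ρ k * P.eval (x k))) : P = 0 := by
  have hzero : ∀ k, ∃ t ∈ Set.Icc (x k) (y k), P.eval t = 0 := by
    intro k
    rcases eq_or_ne k m with rfl | hk
    · exact ⟨x k, h.left_mem_Icc k, htip⟩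
    · have hIVT := intermediate_value_uIcc (P.continuous.continuousOn (s := Set.uIcc (x k) (y k)))
      have hmem : 0 ∈ Set.uIcc (P.eval (x k)) (P.eval (y k)) := by
        rw [Set.mem_uIcc, hmatch k hk]
        rcases le_total 0 (P.eval (x k)) with hx | hx
        · exact .inr ⟨neg_nonpos.2 (mul_nonneg (hρ k) hx), hx⟩
        · exact .inl ⟨hx, neg_nonneg.2 (mul_nonpos_of_nonneg_of_nonpos (hρ k) hx)⟩
      rw [Set.uIcc_of_le (h.lt k).le] at hIVT
      exact hIVT hmem
  choose t ht hPt using hzero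
  exact eq_zero_of_degree_lt_of_eval_index_eq_zero univ (h.injective_of_mem_Icc ht).injOn
    (by rwa [card_univ]) fun k _ ↦ hPt k

theorem eq_zero_of_eval_right_eq_complex (h : OrderedIntervals x y) (hρ : ∀ k, 0 ≤ ρ k)
    {P : ℂ[X]} (hdeg : P.degree < Fintype.card ι) (htip : P.eval (x m : ℂ) = 0)
    (hmatch : ∀ k ≠ m, P.eval (y k : ℂ) = -(ρ k * P.eval (x k : ℂ))) : P = 0 := by
  have hφ (φ : ℂ →ₗ[ℝ] ℝ) (t : ℝ) : φ (P.eval (t : ℂ)) = 0 := by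
    obtain ⟨T, hTdeg, hT⟩ := exists_eval_eq_linearMap_eval φ P
    have hT0 : T = 0 := by
      refine h.eq_zero_of_eval_right_eq hρ (hTdeg.trans_lt hdeg) (m := m) ?_ fun k hk ↦ ?_
      · simp [hT, htip]
      · rw [hT, hT, Complex.coe_algebraMap, hmatch k hk, ← Complex.real_smul, map_neg, map_smul,
          smul_eq_mul]
    simpa [hT0] using (hT t).symm
  refine eq_zero_of_infinite_isRoot P ((Set.infinite_range_of_injective
    Complex.ofReal_injective).mono ?_)
  rintro _ ⟨t, rfl⟩
  exact Complex.ext (hφ Complex.reLm t) (hφ Complex.imLm t)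

theorem hasLogDerivWithinAt_eval (h : OrderedIntervals x y) {P : ℂ[X]}
    (hdeg : P.degree < Fintype.card ι)
    (hmatch : ∀ k ≠ m, P.eval (y k : ℂ) = -(matchingRatio x y k * P.eval (x k : ℂ)))
    (s : Set ℂ) :
    HasLogDerivWithinAt P.eval (((derivative (spinPolynomial x y m)).eval (x m) /
      (spinPolynomial x y m).eval (x m) : ℝ) : ℂ) s (x m) := by
  set Q := spinPolynomial x y m
  have hQ : ((Q.eval (x m) : ℝ) : ℂ) ≠ 0 := by
    rw [h.eval_spinPolynomial_left_self]
    exact Complex.ofReal_ne_zero.2 h.sum_spinWeight_pos.ne'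
  have hQeval (S : ℝ[X]) (t : ℝ) : (S.map Complex.ofRealHom).eval (t : ℂ) = (S.eval t : ℝ) :=
    eval_map_apply Complex.ofRealHom t
  have hprop : C ((Q.eval (x m) : ℝ) : ℂ) * P - C (P.eval (x m : ℂ)) * Q.map Complex.ofRealHom =
      0 := by
    refine h.eq_zero_of_eval_right_eq_complex (m := m) (matchingRatio_nonneg x y) ?_ ?_ ?_
    · refine (degree_sub_le _ _).trans_lt (max_lt ?_ ?_)
      · rwa [degree_C_mul hQ]
      · rw [← smul_eq_C_mul]
        exact ((degree_smul_le _ _).trans degree_map_le).trans_lt (h.degree_spinPolynomial_lt m)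
    · simp only [eval_sub, eval_C_mul, hQeval]
      ring
    · intro k hk
      simp only [eval_sub, eval_C_mul, hQeval, hmatch k hk, Q, h.eval_spinPolynomial_right hk]
      push_cast
      ring
  have hderiv := congrArg (fun R ↦ (derivative R).eval (x m : ℂ)) hprop
  simp only [derivative_sub, derivative_C_mul, derivative_map, eval_sub, eval_C_mul, hQeval,
    derivative_zero, eval_zero] at hderiv
  refine (P.hasDerivWithinAt (x m : ℂ) s).congr_deriv ?_
  rw [Complex.ofReal_div, mul_div_assoc', eq_div_iff hQ]
  linear_combination hderiv

end OrderedIntervals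

end Uniqueness

section PartialDerivative

open Polynomial Function

variable {ι : Type*} {x y : ι → ℝ} {i : ι}

/-- The sum of the `(x i - t)⁻¹` over all endpoints `t` other than `x i`. -/
noncomputable def invDistSum [Fintype ι] [DecidableEq ι] (x y : ι → ℝ) (i : ι) : ℝ :=
  (x i - y i)⁻¹ + ∑ k ∈ univ.erase i, ((x i - x k)⁻¹ + (x i - y k)⁻¹)

theorem inv_sub_selectedPoint (x y : ι → ℝ) (σ : ι → Bool) (i k : ι) :
    (x i - selectedPoint x y i σ k)⁻¹ = ((x i - x k)⁻¹ + (x i - y k)⁻¹) / 2 +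
      spin (σ i) * spin (σ k) / 2 * ((x i - x k)⁻¹ - (x i - y k)⁻¹) := by
  rw [selectedPoint, spin_mul_spin]
  split_ifs <;> grind

theorem crossRatio_update_left_of_ne [DecidableEq ι] {j k : ι} (hj : j ≠ i) (hk : k ≠ i)
    (x y : ι → ℝ) (t : ℝ) :
    crossRatio (update x i t) y j k = crossRatio x y j k := by
  simp only [crossRatio, update_of_ne hj, update_of_ne hk]

variable [LinearOrder ι]

namespace OrderedIntervals

theorem hasLogDerivWithinAt_crossRatio (h : OrderedIntervals x y) {k : ι} (hk : k ≠ i) :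
    HasLogDerivWithinAt (fun t ↦ crossRatio (update x i t) y i k)
      ((x i - x k)⁻¹ - (x i - y k)⁻¹) Set.univ (x i) := by
  have hx : x i ≠ x k := h.ne_of_mem_Icc hk.symm (h.left_mem_Icc i) (h.left_mem_Icc k)
  have hy : x i ≠ y k := h.ne_of_mem_Icc hk.symm (h.left_mem_Icc i) (h.right_mem_Icc k)
  have hyx : y i ≠ x k := h.ne_of_mem_Icc hk.symm (h.right_mem_Icc i) (h.left_mem_Icc k)
  simp only [crossRatio, update_self, update_of_ne hk]
  exact ((HasLogDerivWithinAt.sub_const hx _).const_mul _).div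
    ((HasLogDerivWithinAt.sub_const hy _).const_mul _)
    (mul_ne_zero (sub_ne_zero.2 hyx) (sub_ne_zero.2 hy))

variable [Fintype ι]

theorem hasLogDerivWithinAt_spinWeight (h : OrderedIntervals x y) (i : ι) (σ : ι → Bool) :
    HasLogDerivWithinAt (fun t ↦ spinWeight (update x i t) y σ)
      ((∑ k ∈ univ.erase i, (x i - selectedPoint x y i σ k)⁻¹ -
        (∑ k ∈ univ.erase i, ((x i - x k)⁻¹ + (x i - y k)⁻¹)) / 2) / 2) Set.univ (x i) := by
  have hprod : HasLogDerivWithinAt (fun t ↦ ∏ k ∈ univ.erase i,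
      crossRatio (update x i t) y i k ^ (spin (σ i) * spin (σ k) / 4))
      (∑ k ∈ univ.erase i,
        spin (σ i) * spin (σ k) / 4 * ((x i - x k)⁻¹ - (x i - y k)⁻¹)) Set.univ (x i) :=
    .prod fun k hk ↦ (h.hasLogDerivWithinAt_crossRatio (ne_of_mem_erase hk)).rpow_const
      (by simpa using (h.crossRatio_pos (ne_of_mem_erase hk).symm).ne') _
  have hrest (t : ℝ) : ∏ p : ι × ι with p.1 < p.2 ∧ p.1 ≠ i ∧ p.2 ≠ i,
      crossRatio (update x i t) y p.1 p.2 ^ (spin (σ p.1) * spin (σ p.2) / 4) =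
      ∏ p : ι × ι with p.1 < p.2 ∧ p.1 ≠ i ∧ p.2 ≠ i,
        crossRatio x y p.1 p.2 ^ (spin (σ p.1) * spin (σ p.2) / 4) :=
    prod_congr rfl fun p hp ↦ by
      obtain ⟨-, -, h₁, h₂⟩ := mem_filter.1 hp
      rw [crossRatio_update_left_of_ne h₁ h₂]
  simp only [spinWeight_eq_mul_prod_erase _ y i, hrest]
  convert hprod.const_mul _ using 1
  rw [sum_div, ← sum_sub_distrib, sum_div]
  refine sum_congr rfl fun _ _ ↦ ?_
  rw [inv_sub_selectedPoint]
  ring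

theorem hasLogDerivWithinAt_sum_spinWeight (h : OrderedIntervals x y) (i : ι) :
    HasLogDerivWithinAt (fun t ↦ ∑ σ, spinWeight (update x i t) y σ)
      (((derivative (spinPolynomial x y i)).eval (x i) / (spinPolynomial x y i).eval (x i) -
        (∑ k ∈ univ.erase i, ((x i - x k)⁻¹ + (x i - y k)⁻¹)) / 2) / 2) Set.univ (x i) := by
  have hpos := h.sum_spinWeight_pos
  convert HasLogDerivWithinAt.sum (u := univ)
    (fun σ _ ↦ h.hasLogDerivWithinAt_spinWeight i σ) (by simpa using hpos.ne') using 1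
  rw [h.eval_derivative_spinPolynomial_left_self, h.eval_spinPolynomial_left_self]
  simp only [update_eq_self, mul_div_assoc', mul_sub, ← sum_div, sum_sub_distrib, ← sum_mul]
  field_simp

theorem hasLogDerivWithinAt_prod_length (h : OrderedIntervals x y) (i : ι) (α : ℝ) :
    HasLogDerivWithinAt (fun t ↦ ∏ k, (y k - update x i t k) ^ α) (α * (x i - y i)⁻¹)
      Set.univ (x i) := by
  have hrest (t : ℝ) : ∏ k ∈ univ.erase i, (y k - update x i t k) ^ α =
      ∏ k ∈ univ.erase i, (y k - x k) ^ α :=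
    prod_congr rfl fun k hk ↦ by rw [update_of_ne (ne_of_mem_erase hk)]
  simp only [← prod_erase_mul _ _ (mem_univ i), hrest, update_self]
  exact ((HasLogDerivWithinAt.const_sub (h.lt i).ne _).rpow_const
    (sub_pos.2 (h.lt i)).ne' α).const_mul _

theorem hasLogDerivWithinAt_partitionFunction (h : OrderedIntervals x y) (i : ι) :
    HasLogDerivWithinAt (fun t ↦ partitionFunction (update x i t) y)
      (((derivative (spinPolynomial x y i)).eval (x i) / (spinPolynomial x y i).eval (x i) -
        invDistSum x y i / 2) / 4) Set.univ (x i) := by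
  simp only [partitionFunction]
  convert (h.hasLogDerivWithinAt_prod_length i _).mul
    ((h.hasLogDerivWithinAt_sum_spinWeight i).rpow_const
      (by simpa using h.sum_spinWeight_pos.ne') _) using 1
  rw [invDistSum]
  ring

end OrderedIntervals

theorem differentiableAt_partitionFunction [Fintype ι] {E : Type*} [NormedAddCommGroup E]
    [NormedSpace ℝ E] {X Y : E → ι → ℝ} {v : E} (hX : DifferentiableAt ℝ X v)
    (hY : DifferentiableAt ℝ Y v) (h : OrderedIntervals (X v) (Y v)) :
    DifferentiableAt ℝ (fun u ↦ partitionFunction (X u) (Y u)) v := by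
  have hX' := differentiableAt_pi.1 hX
  have hY' := differentiableAt_pi.1 hY
  have hlength (k : ι) : DifferentiableAt ℝ (fun u ↦ (Y u k - X u k) ^ (-(1 : ℝ) / 8)) v :=
    ((hY' k).sub (hX' k)).rpow_const (.inl (sub_pos.2 (h.lt k)).ne')
  have hcross {j k : ι} (hjk : j ≠ k) :
      DifferentiableAt ℝ (fun u ↦ crossRatio (X u) (Y u) j k) v := by
    simp only [crossRatio, div_eq_mul_inv]
    refine (((hY' j).fun_sub (hY' k)).fun_mul ((hX' j).fun_sub (hX' k))).fun_mul
      ((((hY' j).fun_sub (hX' k)).fun_mul ((hX' j).fun_sub (hY' k))).fun_inv (mul_ne_zero ?_ ?_))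
    · exact sub_ne_zero.2 (h.ne_of_mem_Icc hjk (h.right_mem_Icc j) (h.left_mem_Icc k))
    · exact sub_ne_zero.2 (h.ne_of_mem_Icc hjk (h.left_mem_Icc j) (h.right_mem_Icc k))
  have hweight (σ : ι → Bool) : DifferentiableAt ℝ (fun u ↦ spinWeight (X u) (Y u) σ) v := by
    refine (HasFDerivAt.finsetProd fun p hp ↦ DifferentiableAt.hasFDerivAt ?_).differentiableAt
    have hne : p.1 ≠ p.2 := (mem_filter.1 hp).2.ne
    exact (hcross hne).rpow_const (.inl (h.crossRatio_pos hne).ne')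
  exact (HasFDerivAt.finsetProd fun k _ ↦ (hlength k).hasFDerivAt).differentiableAt.mul
    ((DifferentiableAt.fun_sum fun σ _ ↦ hweight σ).rpow_const (.inl h.sum_spinWeight_pos.ne'))

theorem pderiv'_eq_of_hasDerivAt_update {m : ℕ} {i : Fin m} {f : (Fin m → ℝ) → ℝ}
    {b : Fin m → ℝ} {d : ℝ} (hf : DifferentiableAt ℝ f b)
    (hd : HasDerivAt (fun t ↦ f (update b i t)) d (b i)) : pderiv' i f b = d := by
  rw [← update_eq_self i b] at hf
  have hcomp := hf.hasFDerivAt.comp_hasDerivAt (b i) (hasDerivAt_update b i (b i))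
  rw [update_eq_self] at hcomp
  exact hcomp.unique hd

end PartialDerivative

section Observable

open Polynomial

theorem sub_cpow_ne_zero {p c : ℂ} (h : p ≠ c) (α : ℂ) : (p - c) ^ α ≠ 0 :=
  (Complex.cpow_eq_zero_iff _ _).not.2 fun h₀ ↦ sub_ne_zero.2 h h₀.1

variable {ι : Type*} {x y : ι → ℝ} {i k m : ι} {P : ℂ[X]} {z : ℂ}

/-- The product of the principal square roots of `z - x k` and `z - y k`. -/
noncomputable def pairRoot (x y : ι → ℝ) (k : ι) (z : ℂ) : ℂ :=
  (z - x k) ^ ((1 : ℂ) / 2) * (z - y k) ^ ((1 : ℂ) / 2)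

theorem pairRoot_ne_zero (hx : z ≠ x k) (hy : z ≠ y k) : pairRoot x y k z ≠ 0 :=
  mul_ne_zero (sub_cpow_ne_zero hx _) (sub_cpow_ne_zero hy _)

theorem pairRoot_ne_zero_of_mem_UHP (x y : ι → ℝ) (k : ι) (hz : z ∈ UHP) :
    pairRoot x y k z ≠ 0 :=
  pairRoot_ne_zero (ne_of_mem_of_not_mem hz (ofReal_notMem_UHP _))
    (ne_of_mem_of_not_mem hz (ofReal_notMem_UHP _))

/-- The observable `f_P` in terms of the left endpoints `x` and the right endpoints `y`. -/
noncomputable def observable [Fintype ι] (x y : ι → ℝ) (P : ℂ[X]) (z : ℂ) : ℂ :=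
  P.eval z / ∏ k, pairRoot x y k z

/-- The product of the square roots at the endpoints of all intervals but the `i`-th. -/
noncomputable def otherRoots [Fintype ι] [DecidableEq ι] (x y : ι → ℝ) (i : ι) (z : ℂ) : ℂ :=
  ∏ k ∈ univ.erase i, pairRoot x y k z

theorem observable_mul_pairRoot [Fintype ι] [DecidableEq ι] (x y : ι → ℝ) (i : ι) (P : ℂ[X])
    (hz : z ∈ UHP) :
    observable x y P z * pairRoot x y i z = P.eval z / otherRoots x y i z := by
  have hroot := pairRoot_ne_zero_of_mem_UHP x y i hz
  rw [observable, otherRoots, ← mul_prod_erase univ _ (mem_univ i)]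
  field_simp

theorem sub_cpow_half_mul_observable [Fintype ι] [DecidableEq ι] (x y : ι → ℝ) (m : ι) (P : ℂ[X])
    (hz : z ∈ UHP) :
    (z - x m) ^ ((1 : ℂ) / 2) * observable x y P z =
      P.eval z / ((z - y m) ^ ((1 : ℂ) / 2) * otherRoots x y m z) := by
  have hroot : (z - y m) ^ ((1 : ℂ) / 2) ≠ 0 :=
    sub_cpow_ne_zero (ne_of_mem_of_not_mem hz (ofReal_notMem_UHP _)) _
  rw [mul_comm _ (otherRoots x y m z), ← div_div, ← observable_mul_pairRoot x y m P hz, pairRoot]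
  field_simp

variable [LinearOrder ι]

namespace OrderedIntervals

theorem ofReal_ne_ofReal (h : OrderedIntervals x y) {s t : ℝ} (hik : i ≠ k)
    (hs : s ∈ Set.Icc (x i) (y i)) (ht : t ∈ Set.Icc (x k) (y k)) : (s : ℂ) ≠ t :=
  Complex.ofReal_injective.ne (h.ne_of_mem_Icc hik hs ht)

theorem sub_cpow_half_eq (h : OrderedIntervals x y) (hik : i ≠ k) {t : ℝ}
    (ht : t ∈ Set.Icc (x k) (y k)) :
    ((y i : ℂ) - t) ^ ((1 : ℂ) / 2) =
      √((y i - t) / (x i - t)) * ((x i : ℂ) - t) ^ ((1 : ℂ) / 2) := by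
  have hne : (x i : ℂ) - t ≠ 0 := sub_ne_zero.2 (h.ofReal_ne_ofReal hik (h.left_mem_Icc i) ht)
  have hpos := h.sub_div_sub_pos hik (h.left_mem_Icc i) (h.right_mem_Icc i) ht
  have hsqrt : ((√((y i - t) / (x i - t)) : ℝ) : ℂ) =
      (((y i - t) / (x i - t) : ℝ) : ℂ) ^ ((1 : ℂ) / 2) := by
    rw [Real.sqrt_eq_rpow, Complex.ofReal_cpow hpos.le]
    norm_num
  rw [hsqrt, ← ofReal_mul_cpow_of_pos hpos hne]
  push_cast
  rw [div_mul_cancel₀ _ hne]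

variable [Fintype ι]

theorem otherRoots_ne_zero (h : OrderedIntervals x y) {p : ℝ} (hp : p ∈ Set.Icc (x i) (y i)) :
    otherRoots x y i p ≠ 0 :=
  prod_ne_zero_iff.2 fun k hk ↦
    have hik := (ne_of_mem_erase hk).symm
    pairRoot_ne_zero (h.ofReal_ne_ofReal hik hp (h.left_mem_Icc k))
      (h.ofReal_ne_ofReal hik hp (h.right_mem_Icc k))

theorem otherRoots_right (h : OrderedIntervals x y) (i : ι) :
    otherRoots x y i (y i) = matchingRatio x y i * otherRoots x y i (x i) := by
  simp only [otherRoots, matchingRatio, Complex.ofReal_prod, ← prod_mul_distrib]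
  refine prod_congr rfl fun k hk ↦ ?_
  have hik := (ne_of_mem_erase hk).symm
  rw [pairRoot, pairRoot, h.sub_cpow_half_eq hik (h.left_mem_Icc k),
    h.sub_cpow_half_eq hik (h.right_mem_Icc k)]
  push_cast
  ring

theorem hasLogDerivWithinAt_otherRoots (h : OrderedIntervals x y) {p : ℝ}
    (hp : p ∈ Set.Icc (x i) (y i)) :
    HasLogDerivWithinAt (otherRoots x y i)
      (((∑ k ∈ univ.erase i, ((p - x k)⁻¹ + (p - y k)⁻¹)) / 2 : ℝ) : ℂ) UHP p := by
  unfold otherRoots pairRoot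
  convert HasLogDerivWithinAt.prod (u := univ.erase i) fun k hk ↦
    have hik := (ne_of_mem_erase hk).symm
    (hasLogDerivWithinAt_sub_ofReal_cpow (h.ne_of_mem_Icc hik hp (h.left_mem_Icc k))
      ((1 : ℂ) / 2)).mul
    (hasLogDerivWithinAt_sub_ofReal_cpow (h.ne_of_mem_Icc hik hp (h.right_mem_Icc k))
      ((1 : ℂ) / 2)) using 1
  push_cast
  rw [sum_div]
  exact sum_congr rfl fun k _ ↦ by ring

theorem tendsto_observable_mul_pairRoot (h : OrderedIntervals x y) {p : ℝ}
    (hp : p ∈ Set.Icc (x i) (y i)) (P : ℂ[X]) :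
    Filter.Tendsto (fun z ↦ observable x y P z * pairRoot x y i z) (nhdsWithin p UHP)
      (nhds (P.eval (p : ℂ) / otherRoots x y i p)) := by
  refine Filter.Tendsto.congr' ?_ (P.continuous.continuousWithinAt.tendsto.div
    (h.hasLogDerivWithinAt_otherRoots hp).tendsto (h.otherRoots_ne_zero hp))
  filter_upwards [self_mem_nhdsWithin] with z hz
  exact (observable_mul_pairRoot x y i P hz).symm

theorem eval_right_eq_of_tendsto (h : OrderedIntervals x y) {L : ℂ}
    (hx : Filter.Tendsto (fun z ↦ observable x y P z * pairRoot x y i z) (nhdsWithin (x i) UHP)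
      (nhds L))
    (hy : Filter.Tendsto (fun z ↦ observable x y P z * pairRoot x y i z) (nhdsWithin (y i) UHP)
      (nhds (-L))) :
    P.eval (y i : ℂ) = -(matchingRatio x y i * P.eval (x i : ℂ)) := by
  have := nhdsWithin_UHP_neBot (x i)
  have := nhdsWithin_UHP_neBot (y i)
  have hL := tendsto_nhds_unique hx (h.tendsto_observable_mul_pairRoot (h.left_mem_Icc i) P)
  have hL' := tendsto_nhds_unique hy (h.tendsto_observable_mul_pairRoot (h.right_mem_Icc i) P)
  rw [eq_div_iff (h.otherRoots_ne_zero (h.left_mem_Icc i))] at hL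
  rw [eq_div_iff (h.otherRoots_ne_zero (h.right_mem_Icc i)), h.otherRoots_right] at hL'
  rw [← hL, ← hL']
  ring

theorem hasLogDerivWithinAt_tip (h : OrderedIntervals x y) (hdeg : P.degree < Fintype.card ι)
    (hmatch : ∀ k ≠ m, P.eval (y k : ℂ) = -(matchingRatio x y k * P.eval (x k : ℂ))) :
    HasLogDerivWithinAt
      (fun z ↦ P.eval z / ((z - y m) ^ ((1 : ℂ) / 2) * otherRoots x y m z))
      (((derivative (spinPolynomial x y m)).eval (x m) / (spinPolynomial x y m).eval (x m) -
        invDistSum x y m / 2 : ℝ) : ℂ) UHP (x m) := by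
  have hm := h.left_mem_Icc m
  have hroot : ((x m : ℂ) - y m) ^ ((1 : ℂ) / 2) ≠ 0 :=
    sub_cpow_ne_zero (Complex.ofReal_injective.ne (h.lt m).ne) _
  convert (h.hasLogDerivWithinAt_eval hdeg hmatch UHP).div
    ((hasLogDerivWithinAt_sub_ofReal_cpow (h.lt m).ne ((1 : ℂ) / 2)).mul
      (h.hasLogDerivWithinAt_otherRoots hm)) (mul_ne_zero hroot (h.otherRoots_ne_zero hm)) using 1
  rw [invDistSum]
  push_cast
  ring

theorem tendsto_observable_expansion (h : OrderedIntervals x y) {κ : ℂ}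
    (hdeg : P.degree < Fintype.card ι)
    (hmatch : ∀ k ≠ m, P.eval (y k : ℂ) = -(matchingRatio x y k * P.eval (x k : ℂ)))
    (htip : Filter.Tendsto (fun z ↦ (z - x m) ^ ((1 : ℂ) / 2) * observable x y P z)
      (nhdsWithin (x m) UHP) (nhds κ)) :
    Filter.Tendsto (fun z ↦ ((z - x m) ^ ((1 : ℂ) / 2) * observable x y P z - κ -
        κ * ((derivative (spinPolynomial x y m)).eval (x m) / (spinPolynomial x y m).eval (x m) -
          invDistSum x y m / 2 : ℝ) * (z - x m)) / (z - x m))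
      (nhdsWithin (x m) UHP) (nhds 0) := by
  have := nhdsWithin_UHP_neBot (x m)
  have htip_eq : (fun z : ℂ ↦ P.eval z / ((z - y m) ^ ((1 : ℂ) / 2) * otherRoots x y m z))
      =ᶠ[nhdsWithin (x m : ℂ) UHP] fun z ↦ (z - x m) ^ ((1 : ℂ) / 2) * observable x y P z := by
    filter_upwards [self_mem_nhdsWithin] with z hz
    exact (sub_cpow_half_mul_observable x y m P hz).symm
  have hF := h.hasLogDerivWithinAt_tip hdeg hmatch
  have hκ := tendsto_nhds_unique htip (hF.tendsto.congr' htip_eq)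
  rw [hκ]
  refine (hF.tendsto_expansion_div (ofReal_notMem_UHP _)).congr' ?_
  filter_upwards [htip_eq] with z hz
  rw [hz]

end OrderedIntervals

end Observable

section MarkedPoints

variable {n : ℕ} {b : Fin (2 * n) → ℝ}

/-- The left endpoints `b_{2k-1}` (for `s = false`) or the right endpoints `b_{2k}` (for
`s = true`) of the intervals cut out by the marked points `b`. -/
def endpoints (b : Fin (2 * n) → ℝ) (s : Bool) (k : Fin n) : ℝ := b (idx n k s)

theorem val_idx (k : Fin n) (s : Bool) : (idx n k s).val = 2 * k + s.toNat := by
  cases s <;> rfl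

theorem idx_injective : Function.Injective fun p : Fin n × Bool ↦ idx n p.1 p.2 := by
  rintro ⟨j, s⟩ ⟨k, t⟩ h
  have hval := congrArg Fin.val h
  simp only [val_idx] at hval
  cases s <;> cases t <;> simp at hval ⊢ <;> omega

theorem idx_bijective : Function.Bijective fun p : Fin n × Bool ↦ idx n p.1 p.2 :=
  (Fintype.bijective_iff_injective_and_card _).2 ⟨idx_injective, by simp [mul_comm]⟩

theorem orderedIntervals_endpoints (hb : b ∈ chamber n) :
    OrderedIntervals (endpoints b false) (endpoints b true) where
  lt k := hb (by simp [Fin.lt_def, val_idx])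
  right_lt_left {j k} hjk := hb (by simp [Fin.lt_def, val_idx]; omega)

theorem Zfun_eq_partitionFunction (b : Fin (2 * n) → ℝ) :
    Zfun n b = partitionFunction (endpoints b false) (endpoints b true) :=
  rfl

theorem fP_eq_observable (b : Fin (2 * n) → ℝ) (P : Polynomial ℂ) :
    fP n b P = observable (endpoints b false) (endpoints b true) P := by
  ext z
  rw [fP, Dfun, observable, ← idx_bijective.prod_comp, Fintype.prod_prod_type]
  congr 1
  exact prod_congr rfl fun k _ ↦ (Fintype.prod_bool _).trans (mul_comm _ _)

theorem endpoints_update_idx (b : Fin (2 * n) → ℝ) (m : Fin n) (s : Bool) (t : ℝ) :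
    endpoints (Function.update b (idx n m s) t) s = Function.update (endpoints b s) m t :=
  Function.update_comp_eq_of_injective b (fun _ _ h ↦ (Prod.mk.inj (idx_injective h)).1) m t

theorem endpoints_update_idx_of_ne (b : Fin (2 * n) → ℝ) (m : Fin n) {s s' : Bool} (hs : s' ≠ s)
    (t : ℝ) : endpoints (Function.update b (idx n m s) t) s' = endpoints b s' := by
  ext k
  exact Function.update_of_ne (fun h ↦ hs (Prod.mk.inj (idx_injective h)).2) ..

theorem four_mul_pderiv'_log_Zfun (hb : b ∈ chamber n) (m : Fin n) :
    4 * pderiv' (idx n m false) (fun c ↦ Real.log (Zfun n c)) b =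
      (Polynomial.derivative (spinPolynomial (endpoints b false) (endpoints b true) m)).eval
          (endpoints b false m) /
        (spinPolynomial (endpoints b false) (endpoints b true) m).eval (endpoints b false m) -
        invDistSum (endpoints b false) (endpoints b true) m / 2 := by
  have h := orderedIntervals_endpoints hb
  have hdiff (s : Bool) : DifferentiableAt ℝ (fun c : Fin (2 * n) → ℝ ↦ endpoints c s) b :=
    differentiableAt_pi.2 fun k ↦ differentiableAt_apply (idx n k s) b
  rw [mul_comm, ← eq_div_iff four_ne_zero]
  refine pderiv'_eq_of_hasDerivAt_update ?_ ?_
  · exact (differentiableAt_partitionFunction (hdiff false) (hdiff true) h).log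
      h.partitionFunction_pos.ne'
  · simp only [Zfun_eq_partitionFunction, endpoints_update_idx,
      endpoints_update_idx_of_ne b m Bool.false_ne_true.symm]
    refine (h.hasLogDerivWithinAt_partitionFunction m).hasDerivAt_log ?_
    simpa using h.partitionFunction_pos.ne'

end MarkedPoints

theorem observable_expansion_at_tip_general (n : ℕ) (b : Fin (2 * n) → ℝ) (hb : b ∈ chamber n)
    (m : Fin n) (P : Polynomial ℂ) (κ : ℂ) (hdeg : P.degree < n)
    (hmatch : ∀ k : Fin n, k ≠ m → ∃ L : ℂ,
      Filter.Tendsto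
        (fun z : ℂ ↦ fP n b P z * (z - (b (idx n k false) : ℂ)) ^ ((1 : ℂ) / 2)
          * (z - (b (idx n k true) : ℂ)) ^ ((1 : ℂ) / 2))
        (nhdsWithin (b (idx n k false) : ℂ) UHP) (nhds L) ∧
      Filter.Tendsto
        (fun z : ℂ ↦ fP n b P z * (z - (b (idx n k false) : ℂ)) ^ ((1 : ℂ) / 2)
          * (z - (b (idx n k true) : ℂ)) ^ ((1 : ℂ) / 2))
        (nhdsWithin (b (idx n k true) : ℂ) UHP) (nhds (-L)))
    (htip : Filter.Tendsto
      (fun z : ℂ ↦ (z - (b (idx n m false) : ℂ)) ^ ((1 : ℂ) / 2) * fP n b P z)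
      (nhdsWithin (b (idx n m false) : ℂ) UHP) (nhds κ)) :
    Filter.Tendsto
      (fun z : ℂ ↦
        ((z - (b (idx n m false) : ℂ)) ^ ((1 : ℂ) / 2) * fP n b P z - κ
          - 4 * κ
              * ((pderiv' (idx n m false) (fun x ↦ Real.log (Zfun n x)) b : ℝ) : ℂ)
              * (z - (b (idx n m false) : ℂ)))
        / (z - (b (idx n m false) : ℂ)))
      (nhdsWithin (b (idx n m false) : ℂ) UHP) (nhds 0) := by
  have h := orderedIntervals_endpoints hb
  rw [fP_eq_observable] at htip hmatch ⊢
  have hPmatch (k : Fin n) (hk : k ≠ m) :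
      P.eval (endpoints b true k : ℂ) = -(matchingRatio (endpoints b false) (endpoints b true) k *
        P.eval (endpoints b false k : ℂ)) := by
    obtain ⟨L, hleft, hright⟩ := hmatch k hk
    simp only [mul_assoc] at hleft hright
    exact h.eval_right_eq_of_tendsto hleft hright
  refine (h.tendsto_observable_expansion (by simpa using hdeg) hPmatch htip).congr fun z ↦ ?_
  rw [← four_mul_pderiv'_log_Zfun hb]
  simp only [endpoints]
  push_cast
  ring

/-- expansion of the observable `f = f_P` at the tip `b₁`:
`f(z) = i (z − b₁)^{−1/2} (1 + 2𝒜(b)(z − b₁) + o(z − b₁))` as `z → b₁` in `ℍ`,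
where `𝒜(b) = 2 ∂_{b₁} log Z(b)`. -/
theorem observable_expansion_at_tip (n : ℕ) (hn : 1 ≤ n)
    (b : Fin (2*n) → ℝ) (hb : b ∈ chamber n)
    (P : Polynomial ℂ) (hP : Admissible n hn b P) :
    Filter.Tendsto
      (fun z : ℂ =>
        ((z - (b ⟨0, by omega⟩ : ℂ)) ^ ((1:ℂ)/2) * fP n b P z - Complex.I
          - 4 * Complex.I
              * ((pderiv' ⟨0, by omega⟩ (fun x => Real.log (Zfun n x)) b : ℝ) : ℂ)
              * (z - (b ⟨0, by omega⟩ : ℂ)))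
        / (z - (b ⟨0, by omega⟩ : ℂ)))
      (nhdsWithin (b ⟨0, by omega⟩ : ℂ) UHP) (nhds 0) := by
  obtain ⟨hdeg, hmatch, htip⟩ := hP
  exact observable_expansion_at_tip_general n b hb ⟨0, hn⟩ P Complex.I
    (Polynomial.degree_le_natDegree.trans_lt (by exact_mod_cast by omega))
    (fun k hk ↦ hmatch k (Nat.one_le_iff_ne_zero.2 (Fin.val_ne_of_ne hk))) htip
end

section
/- Let n ≥ 1 and b ∈ X_n. Then there exists a unique polynomial P ∈ ℂ[z] that is admissible for b; that is, there is exactly one polynomial P of degree at most n − 1 such that f_P(z) = P(z)/∏_{j=1}^{2n}(z − b_j)^{1/2} satisfies the matching conditions (i) for i = 2, …, n and the normalization (ii) at b_1. -/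
open scoped BigOperators
open Finset

/-!
Each condition defining admissibility becomes a linear equation on the values of `P` at one pair
`x = b_{2k-1}`, `y = b_{2k}`. For `b_j` outside the pair, `x - b_j` and `y - b_j` have the same
sign, so the boundary values at `x` and `y` of the product of the remaining square roots differ by a
factor `r > 0`, and the matching condition reads `P(x) + r P(y) = 0`. A real polynomial
satisfying it has a root in `[x, y]`, so the homogeneous system forces `n` roots in disjoint
intervals on a real polynomial of degree less than `n`, which therefore vanishes. The real system is
square, hence also solvable; taking real and imaginary parts, so is the complex one, and its
solution is then unique.
-/

section Interpolation

open Polynomial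
open scoped Function

lemma natDegree_le_sub_one_iff_mem_degreeLT {R : Type*} [Semiring R] {P : R[X]} {n : ℕ}
    (hn : 0 < n) : P.natDegree ≤ n - 1 ↔ P ∈ degreeLT R n := by
  obtain ⟨m, rfl⟩ := Nat.exists_eq_add_one.2 hn
  rw [degreeLT_succ_eq_degreeLE, mem_degreeLE, natDegree_le_iff_degree_le, Nat.add_sub_cancel]

section CommRing

variable {R ι : Type*} [CommRing R]

/-- The linear map `P ↦ (P(xₖ) + rₖ P(yₖ))ₖ` attached to the points `xₖ`, `yₖ` and the weights
`rₖ`. Both the matching conditions and the normalization are values of it, the latter for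
`rₖ = 0`. -/
noncomputable def twoPointEval (x y r : ι → R) : R[X] →ₗ[R] ι → R :=
  LinearMap.pi fun k => leval (x k) + r k • leval (y k)

@[simp]
lemma twoPointEval_apply (x y r : ι → R) (P : R[X]) (k : ι) :
    twoPointEval x y r P k = P.eval (x k) + r k * P.eval (y k) := rfl

lemma injective_domRestrict_degreeLT_of_exists_isRoot [IsDomain R] [Fintype ι]
    {L : R[X] →ₗ[R] ι → R} {I : ι → Set R} (hI : Pairwise (Disjoint on I))
    (hL : ∀ P k, L P k = 0 → ∃ t ∈ I k, P.IsRoot t) :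
    Function.Injective (L.domRestrict (degreeLT R (Fintype.card ι))) := by
  rw [injective_iff_map_eq_zero]
  rintro ⟨P, hP⟩ hLP
  choose t htI ht using fun k => hL P k (congrFun hLP k)
  have ht_inj : Function.Injective t := fun i j hij =>
    hI.eq (Set.not_disjoint_iff.2 ⟨t i, htI i, hij ▸ htI j⟩)
  exact Subtype.ext <| eq_zero_of_degree_lt_of_eval_index_eq_zero (s := univ) (v := t)
    ht_inj.injOn (mem_degreeLT.1 hP) fun k _ => ht k

end CommRing

lemma injective_domRestrict_degreeLT_iff_surjective {K ι : Type*} [Field K] [Fintype ι]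
    (L : K[X] →ₗ[K] ι → K) :
    Function.Injective (L.domRestrict (degreeLT K (Fintype.card ι))) ↔
      Function.Surjective (L.domRestrict (degreeLT K (Fintype.card ι))) := by
  have e := degreeLTEquiv K (Fintype.card ι)
  have : FiniteDimensional K (degreeLT K (Fintype.card ι)) := e.symm.finiteDimensional
  exact LinearMap.injective_iff_surjective_of_finrank_eq_finrank (by simp [e.finrank_eq])

lemma exists_isRoot_mem_uIcc {P : ℝ[X]} {x y r : ℝ} (hr : 0 ≤ r)
    (h : P.eval x + r * P.eval y = 0) : ∃ t ∈ Set.uIcc x y, P.IsRoot t := by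
  have h0 : (0 : ℝ) ∈ Set.uIcc (P.eval x) (P.eval y) := by
    rw [Set.mem_uIcc]
    rcases le_total 0 (P.eval y) with hy | hy
    · exact Or.inl ⟨by linarith [mul_nonneg hr hy], hy⟩
    · exact Or.inr ⟨hy, by linarith [mul_nonpos_of_nonneg_of_nonpos hr hy]⟩
  exact intermediate_value_uIcc P.continuous.continuousOn h0

variable {ι : Type*} {x y r : ι → ℝ}

lemma twoPointEval_ofReal (P : ℝ[X]) (k : ι) :
    twoPointEval (fun k => (x k : ℂ)) (fun k => (y k : ℂ)) (fun k => (r k : ℂ))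
      (P.map Complex.ofRealHom) k = twoPointEval x y r P k := by
  have heval (t : ℝ) : (P.map Complex.ofRealHom).eval (t : ℂ) = P.eval t :=
    eval_map_apply Complex.ofRealHom t
  simp [heval]

variable [Fintype ι]

lemma surjective_twoPointEval_real (hI : Pairwise (Disjoint on fun k => Set.uIcc (x k) (y k)))
    (hr : ∀ k, 0 ≤ r k) :
    Function.Surjective ((twoPointEval x y r).domRestrict (degreeLT ℝ (Fintype.card ι))) :=
  (injective_domRestrict_degreeLT_iff_surjective _).1 <|
    injective_domRestrict_degreeLT_of_exists_isRoot hI fun _ k h => exists_isRoot_mem_uIcc (hr k) h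

lemma surjective_twoPointEval_complex (hI : Pairwise (Disjoint on fun k => Set.uIcc (x k) (y k)))
    (hr : ∀ k, 0 ≤ r k) :
    Function.Surjective ((twoPointEval (fun k => (x k : ℂ)) (fun k => (y k : ℂ))
      (fun k => (r k : ℂ))).domRestrict (degreeLT ℂ (Fintype.card ι))) := by
  intro c
  obtain ⟨⟨P, hP⟩, hPc⟩ := surjective_twoPointEval_real hI hr fun k => (c k).re
  obtain ⟨⟨Q, hQ⟩, hQc⟩ := surjective_twoPointEval_real hI hr fun k => (c k).im
  have hmap {S : ℝ[X]} (hS : S ∈ degreeLT ℝ (Fintype.card ι)) :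
      S.map Complex.ofRealHom ∈ degreeLT ℂ (Fintype.card ι) :=
    mem_degreeLT.2 (degree_map_le.trans_lt (mem_degreeLT.1 hS))
  refine ⟨⟨P.map Complex.ofRealHom + Complex.I • Q.map Complex.ofRealHom,
    add_mem (hmap hP) (Submodule.smul_mem _ _ (hmap hQ))⟩, funext fun k => ?_⟩
  have hre : twoPointEval x y r P k = (c k).re := congrFun hPc k
  have him : twoPointEval x y r Q k = (c k).im := congrFun hQc k
  rw [LinearMap.domRestrict_apply, map_add, map_smul, Pi.add_apply, Pi.smul_apply,
    twoPointEval_ofReal, twoPointEval_ofReal, hre, him, smul_eq_mul, mul_comm, Complex.re_add_im]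

theorem existsUnique_mem_degreeLT_twoPointEval_eq
    (hI : Pairwise (Disjoint on fun k => Set.uIcc (x k) (y k))) (hr : ∀ k, 0 ≤ r k) (c : ι → ℂ) :
    ∃! P : ℂ[X], P ∈ degreeLT ℂ (Fintype.card ι) ∧
      twoPointEval (fun k => (x k : ℂ)) (fun k => (y k : ℂ)) (fun k => (r k : ℂ)) P = c := by
  have hsurj := surjective_twoPointEval_complex hI hr
  have hinj := (injective_domRestrict_degreeLT_iff_surjective _).2 hsurj
  obtain ⟨P, hPc⟩ := hsurj c
  refine ⟨P, ⟨P.2, hPc⟩, ?_⟩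
  rintro Q ⟨hQ, hQc⟩
  exact congrArg Subtype.val (@hinj ⟨Q, hQ⟩ P (hQc.trans hPc.symm))

end Interpolation

section BoundaryValues

open Filter Topology

lemma nhdsWithin_UHP_ofReal_neBot (x : ℝ) : (𝓝[UHP] (x : ℂ)).NeBot := by
  rw [← mem_closure_iff_nhdsWithin_neBot, UHP, Complex.closure_setOfPred_lt_im]
  simp

lemma tendsto_nhdsWithin_UHP_iff_eq {f : ℂ → ℂ} {x : ℝ} {a c : ℂ}
    (hf : Tendsto f (𝓝[UHP] (x : ℂ)) (𝓝 a)) : Tendsto f (𝓝[UHP] (x : ℂ)) (𝓝 c) ↔ a = c :=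
  have := nhdsWithin_UHP_ofReal_neBot x
  ⟨tendsto_nhds_unique hf, fun h => h ▸ hf⟩

lemma sub_ofReal_ne_zero_of_mem_UHP {z : ℂ} (hz : z ∈ UHP) (t : ℝ) : z - t ≠ 0 := fun h =>
  (show 0 < z.im from hz).ne' (by simpa using congrArg Complex.im h)

lemma continuousWithinAt_cpow_const_im_nonneg {z : ℂ} (hz : z ≠ 0) (s : ℂ) :
    ContinuousWithinAt (fun w : ℂ => w ^ s) {w | 0 ≤ w.im} z := by
  have hlog : ContinuousWithinAt Complex.log {w | 0 ≤ w.im} z := by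
    by_cases hslit : z ∈ Complex.slitPlane
    · exact (continuousAt_clog hslit).continuousWithinAt
    · obtain ⟨hre, him⟩ : z.re ≤ 0 ∧ z.im = 0 := by
        simpa [Complex.mem_slitPlane_iff] using hslit
      have hre' : z.re < 0 := hre.lt_of_ne fun h => hz (Complex.ext h him)
      exact Complex.continuousWithinAt_log_of_re_neg_of_im_zero hre' him
  have hexp : ContinuousWithinAt (fun w => Complex.exp (Complex.log w * s)) {w | 0 ≤ w.im} z :=
    (hlog.mul_const s).cexp
  refine hexp.congr_of_eventuallyEq ?_ (Complex.cpow_def_of_ne_zero hz s)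
  filter_upwards [nhdsWithin_le_nhds (isOpen_ne.mem_nhds hz)] with w hw
  exact Complex.cpow_def_of_ne_zero hw s

lemma tendsto_sub_ofReal_cpow_nhdsWithin_UHP {x t : ℝ} (h : x ≠ t) (s : ℂ) :
    Tendsto (fun z : ℂ => (z - t) ^ s) (𝓝[UHP] (x : ℂ)) (𝓝 (((x : ℂ) - t) ^ s)) := by
  have hne : (x : ℂ) - t ≠ 0 := sub_ne_zero.2 (Complex.ofReal_injective.ne h)
  have hmaps : Set.MapsTo (fun z : ℂ => z - t) UHP {w | 0 ≤ w.im} := fun z hz => by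
    simpa using (show 0 < z.im from hz).le
  exact (continuousWithinAt_cpow_const_im_nonneg hne s).tendsto.comp <|
    (continuous_sub_right (t : ℂ)).continuousWithinAt.tendsto_nhdsWithin hmaps

lemma ofReal_cpow_half_eq_sqrt_div_mul {s t : ℝ} (h : 0 < s / t) :
    (s : ℂ) ^ ((1 : ℂ) / 2) = (√(s / t) : ℂ) * (t : ℂ) ^ ((1 : ℂ) / 2) := by
  have ht : (t : ℂ) ≠ 0 := Complex.ofReal_ne_zero.2 (div_ne_zero_iff.1 h.ne').2
  have hs : (s : ℂ) = ((s / t : ℝ) : ℂ) * t := by push_cast; field_simp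
  have hst : ((s / t : ℝ) : ℂ) ≠ 0 := Complex.ofReal_ne_zero.2 h.ne'
  calc (s : ℂ) ^ ((1 : ℂ) / 2)
      = ((s / t : ℝ) : ℂ) ^ ((1 : ℂ) / 2) * (t : ℂ) ^ ((1 : ℂ) / 2) := by
        rw [hs, Complex.cpow_def_of_ne_zero (mul_ne_zero hst ht), Complex.log_ofReal_mul h ht,
          Complex.ofReal_log h.le, add_mul, Complex.exp_add, ← Complex.cpow_def_of_ne_zero hst,
          ← Complex.cpow_def_of_ne_zero ht]
    _ = (√(s / t) : ℂ) * (t : ℂ) ^ ((1 : ℂ) / 2) := by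
        rw [Real.sqrt_eq_rpow, Complex.ofReal_cpow h.le]; norm_num

section SqrtProd

variable {ι : Type*} (b : ι → ℝ) (S : Finset ι)

/-- The partial product `∏_{j ∈ S} (z − b_j)^{1/2}` of principal square roots. For `S = univ` it is
the denominator `D`; splitting `D` along a set of indices isolates its zeros at a boundary point. -/
noncomputable def sqrtProd (z : ℂ) : ℂ := ∏ j ∈ S, (z - (b j : ℂ)) ^ ((1 : ℂ) / 2)

/-- The positive factor by which `sqrtProd b S` at `x` differs from its value at `y`, when no `b_j`
with `j ∈ S` separates `x` from `y`. -/
noncomputable def sqrtRatio (x y : ℝ) : ℝ := ∏ j ∈ S, √((x - b j) / (y - b j))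

variable {b S}

lemma sqrtRatio_nonneg (x y : ℝ) : 0 ≤ sqrtRatio b S x y :=
  prod_nonneg fun _ _ => Real.sqrt_nonneg _

lemma sqrtProd_eq_sqrtRatio_mul {x y : ℝ} (h : ∀ j ∈ S, 0 < (x - b j) / (y - b j)) :
    sqrtProd b S x = sqrtRatio b S x y * sqrtProd b S y := by
  simp only [sqrtProd, sqrtRatio, Complex.ofReal_prod, ← prod_mul_distrib, ← Complex.ofReal_sub]
  exact prod_congr rfl fun j hj => ofReal_cpow_half_eq_sqrt_div_mul (h j hj)

lemma sqrtProd_ne_zero {z : ℂ} (h : ∀ j ∈ S, z - b j ≠ 0) : sqrtProd b S z ≠ 0 :=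
  prod_ne_zero_iff.2 fun j hj => mt (Complex.cpow_eq_zero_iff _ _).1 fun h0 => h j hj h0.1

lemma sqrtProd_ofReal_ne_zero {x : ℝ} (h : ∀ j ∈ S, x ≠ b j) : sqrtProd b S x ≠ 0 :=
  sqrtProd_ne_zero fun j hj => sub_ne_zero.2 (Complex.ofReal_injective.ne (h j hj))

lemma tendsto_sqrtProd {x : ℝ} (h : ∀ j ∈ S, x ≠ b j) :
    Tendsto (sqrtProd b S) (𝓝[UHP] (x : ℂ)) (𝓝 (sqrtProd b S x)) :=
  tendsto_finsetProd _ fun j hj => tendsto_sub_ofReal_cpow_nhdsWithin_UHP (h j hj) _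

end SqrtProd

variable {n : ℕ} {b : Fin (2 * n) → ℝ} (P : Polynomial ℂ)

lemma fP_mul_sqrtProd (S : Finset (Fin (2 * n))) {z : ℂ} (hz : z ∈ UHP) :
    fP n b P z * sqrtProd b S z = P.eval z / sqrtProd b Sᶜ z := by
  have hS : sqrtProd b S z ≠ 0 := sqrtProd_ne_zero fun j _ => sub_ofReal_ne_zero_of_mem_UHP hz (b j)
  have hD : Dfun n b z = sqrtProd b S z * sqrtProd b Sᶜ z := (prod_mul_prod_compl S _).symm
  rw [fP, hD, div_mul_eq_mul_div, mul_comm (P.eval z), mul_div_mul_left _ _ hS]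

lemma tendsto_fP_mul_sqrtProd {S : Finset (Fin (2 * n))} {x : ℝ} (h : ∀ j ∈ Sᶜ, x ≠ b j) :
    Tendsto (fun z => fP n b P z * sqrtProd b S z) (𝓝[UHP] (x : ℂ))
      (𝓝 (P.eval (x : ℂ) / sqrtProd b Sᶜ x)) := by
  have hlim := ((P.continuous.tendsto (x : ℂ)).mono_left nhdsWithin_le_nhds).div
    (tendsto_sqrtProd h) (sqrtProd_ofReal_ne_zero h)
  refine hlim.congr' ?_
  filter_upwards [self_mem_nhdsWithin] with z hz
  exact (fP_mul_sqrtProd P S hz).symm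

lemma normalization_iff {i : Fin (2 * n)} (h : ∀ l ∈ ({i} : Finset _)ᶜ, b i ≠ b l) (c : ℂ) :
    Tendsto (fun z : ℂ => (z - (b i : ℂ)) ^ ((1 : ℂ) / 2) * fP n b P z) (𝓝[UHP] (b i : ℂ)) (𝓝 c) ↔
      P.eval (b i : ℂ) = c * sqrtProd b {i}ᶜ (b i) := by
  have hlim := tendsto_fP_mul_sqrtProd P h
  simp only [sqrtProd, prod_singleton, mul_comm (fP n b P _)] at hlim
  rw [tendsto_nhdsWithin_UHP_iff_eq hlim]
  exact div_eq_iff (sqrtProd_ofReal_ne_zero h)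

lemma matching_iff {i j : Fin (2 * n)} (hij : i ≠ j)
    (h : ∀ l ∈ ({i, j} : Finset _)ᶜ, 0 < (b i - b l) / (b j - b l)) :
    (∃ L : ℂ,
      Tendsto (fun z : ℂ => fP n b P z * (z - (b i : ℂ)) ^ ((1 : ℂ) / 2)
        * (z - (b j : ℂ)) ^ ((1 : ℂ) / 2)) (𝓝[UHP] (b i : ℂ)) (𝓝 L) ∧
      Tendsto (fun z : ℂ => fP n b P z * (z - (b i : ℂ)) ^ ((1 : ℂ) / 2)
        * (z - (b j : ℂ)) ^ ((1 : ℂ) / 2)) (𝓝[UHP] (b j : ℂ)) (𝓝 (-L))) ↔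
      P.eval (b i : ℂ) + sqrtRatio b {i, j}ᶜ (b i) (b j) * P.eval (b j : ℂ) = 0 := by
  have hne_i : ∀ l ∈ ({i, j} : Finset _)ᶜ, b i ≠ b l := fun l hl =>
    sub_ne_zero.1 (div_ne_zero_iff.1 (h l hl).ne').1
  have hne_j : ∀ l ∈ ({i, j} : Finset _)ᶜ, b j ≠ b l := fun l hl =>
    sub_ne_zero.1 (div_ne_zero_iff.1 (h l hl).ne').2
  have hprod (z : ℂ) : fP n b P z * (z - (b i : ℂ)) ^ ((1 : ℂ) / 2)
      * (z - (b j : ℂ)) ^ ((1 : ℂ) / 2) = fP n b P z * sqrtProd b {i, j} z := by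
    rw [sqrtProd, prod_pair hij, mul_assoc]
  have hQi := sqrtProd_ofReal_ne_zero hne_i
  have hQj := sqrtProd_ofReal_ne_zero hne_j
  have hQ := sqrtProd_eq_sqrtRatio_mul h
  simp only [hprod, tendsto_nhdsWithin_UHP_iff_eq (tendsto_fP_mul_sqrtProd P hne_i),
    tendsto_nhdsWithin_UHP_iff_eq (tendsto_fP_mul_sqrtProd P hne_j), exists_eq_left']
  rw [hQ] at hQi ⊢
  rw [← neg_div, div_eq_div_iff hQj hQi, ← mul_assoc, mul_left_inj' hQj, eq_neg_iff_add_eq_zero,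
    mul_comm (P.eval _) (sqrtRatio _ _ _ _ : ℂ), add_comm]

end BoundaryValues

section Pairs

open Polynomial
open scoped Function

variable (n : ℕ) (b : Fin (2 * n) → ℝ)

/-- The weight, in the `k`-th equation, of the value of `P` at the right point of the `k`-th pair.
It is `0` for the first pair, whose equation is the normalization and only involves `P(b_1)`. -/
noncomputable def pairWeight (k : Fin n) : ℝ :=
  if k.val = 0 then 0
  else sqrtRatio b {idx n k false, idx n k true}ᶜ (b (idx n k false)) (b (idx n k true))

/-- The right-hand sides of the linear system: `P(b_1)` is prescribed by the normalization, and the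
matching conditions are homogeneous. -/
noncomputable def pairValue (k : Fin n) : ℂ :=
  if k.val = 0 then Complex.I * sqrtProd b {idx n k false}ᶜ (b (idx n k false)) else 0

variable {n b}

lemma pairWeight_nonneg (k : Fin n) : 0 ≤ pairWeight n b k := by
  unfold pairWeight
  split_ifs
  exacts [le_rfl, sqrtRatio_nonneg _ _]

lemma val_idx_false (k : Fin n) : (idx n k false).val = 2 * k.val := rfl

lemma val_idx_true (k : Fin n) : (idx n k true).val = 2 * k.val + 1 := rfl

lemma idx_false_lt_idx_true (k : Fin n) : idx n k false < idx n k true := by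
  rw [Fin.lt_def, val_idx_false, val_idx_true]
  omega

lemma idx_true_lt_idx_false {k l : Fin n} (h : k < l) : idx n k true < idx n l false := by
  rw [Fin.lt_def] at h ⊢
  rw [val_idx_false, val_idx_true]
  omega

lemma lt_idx_false_or_idx_true_lt {k : Fin n} {l : Fin (2 * n)}
    (hl : l ∈ ({idx n k false, idx n k true} : Finset _)ᶜ) :
    l < idx n k false ∨ idx n k true < l := by
  simp only [mem_compl, mem_insert, mem_singleton, Fin.ext_iff, val_idx_false, val_idx_true] at hl
  simp only [Fin.lt_def, val_idx_false, val_idx_true]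
  omega

lemma sub_div_sub_pos_of_notMem_pair (hb : StrictMono b) {k : Fin n} {l : Fin (2 * n)}
    (hl : l ∈ ({idx n k false, idx n k true} : Finset _)ᶜ) :
    0 < (b (idx n k false) - b l) / (b (idx n k true) - b l) := by
  have hk := hb (idx_false_lt_idx_true k)
  rcases lt_idx_false_or_idx_true_lt hl with h | h
  · have := hb h
    exact div_pos (by linarith) (by linarith)
  · have := hb h
    exact div_pos_of_neg_of_neg (by linarith) (by linarith)

lemma pairwise_disjoint_uIcc_pair (hb : StrictMono b) :
    Pairwise (Disjoint on fun k : Fin n => Set.uIcc (b (idx n k false)) (b (idx n k true))) := by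
  refine (pairwise_disjoint_on _).2 fun k l hkl => Set.disjoint_left.2 fun t htk htl => ?_
  rw [Set.uIcc_of_le (hb (idx_false_lt_idx_true _)).le] at htk htl
  exact (htk.2.trans_lt (hb (idx_true_lt_idx_false hkl))).not_ge htl.1

lemma admissible_iff (hn : 0 < n) (hb : StrictMono b) (P : ℂ[X]) :
    Admissible n hn b P ↔ P ∈ degreeLT ℂ n ∧
      twoPointEval (fun k => (b (idx n k false) : ℂ)) (fun k => (b (idx n k true) : ℂ))
        (fun k => (pairWeight n b k : ℂ)) P = pairValue n b := by
  have hnorm := normalization_iff P (b := b) (i := idx n ⟨0, hn⟩ false)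
    (fun l hl => hb.injective.ne fun h => by simp [h] at hl) Complex.I
  have hmatch (k : Fin n) := matching_iff P (b := b) (idx_false_lt_idx_true k).ne
    fun l hl => sub_div_sub_pos_of_notMem_pair hb hl
  refine and_congr (natDegree_le_sub_one_iff_mem_degreeLT hn) ?_
  simp only [hmatch, funext_iff, twoPointEval_apply, pairWeight, pairValue]
  refine (and_congr_right' hnorm).trans ⟨fun ⟨h, h0⟩ k => ?_, fun h => ⟨fun k hk => ?_, ?_⟩⟩
  · by_cases hk : k.val = 0
    · obtain rfl : k = ⟨0, hn⟩ := Fin.ext hk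
      simpa using h0
    · simpa [hk] using h k (Nat.one_le_iff_ne_zero.2 hk)
  · simpa [Nat.one_le_iff_ne_zero.1 hk] using h k
  · simpa using h ⟨0, hn⟩

end Pairs

/-- existence and uniqueness of the admissible polynomial. -/
theorem exists_unique_admissible (n : ℕ) (hn : 1 ≤ n)
    (b : Fin (2*n) → ℝ) (hb : b ∈ chamber n) :
    ∃! P : Polynomial ℂ, Admissible n hn b P := by
  have hmono : StrictMono b := hb
  simpa only [admissible_iff hn hmono, Fintype.card_fin] using
    existsUnique_mem_degreeLT_twoPointEval_eq (pairwise_disjoint_uIcc_pair hmono)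
      pairWeight_nonneg (pairValue n b)
end
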